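/- arXiv:1309.5898 — 8 statements merged into one kernel-verified Lean document; each statement's English description precedes it below -/
import Mathlib

section
/- Let L be a linear map from m×m complex matrices to n×n complex matrices. Then L admits a Kraus representation, i.e. there exist k ≥ 1 and matrices A_1,…,A_k ∈ ℂ^{n×m} such that L(X) = ∑_{i=1}^k A_i X A_i^* for all X ∈ ℂ^{m×m}, if and only if the Choi matrix Z(L) is positive semidefinite. -/
open Matrix
open scoped ComplexOrder

/-- The Choi matrix of a linear map `L` from `m × m` to `n × n` complex matrices:
its `((i,p),(j,q))` entry is the `(p,q)` entry of `L(E_{ij})`. -/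
def choi (m n : ℕ) (L : Matrix (Fin m) (Fin m) ℂ →ₗ[ℂ] Matrix (Fin n) (Fin n) ℂ) :
    Matrix (Fin m × Fin n) (Fin m × Fin n) ℂ :=
  Matrix.of fun ip jq => L (Matrix.single ip.1 jq.1 (1 : ℂ)) ip.2 jq.2

/-- `L` is a quantum channel: it admits a Kraus representation
`L(X) = ∑ Aᵢ X Aᵢ*` with `∑ Aᵢ* Aᵢ = I`. -/
def IsChannel (m n : ℕ) (L : Matrix (Fin m) (Fin m) ℂ →ₗ[ℂ] Matrix (Fin n) (Fin n) ℂ) : Prop :=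
  ∃ (k : ℕ) (A : Fin k → Matrix (Fin n) (Fin m) ℂ),
    (∀ X, L X = ∑ i, A i * X * (A i)ᴴ) ∧ ∑ i, (A i)ᴴ * A i = 1

/-- `L` is an extreme point of the convex set of quantum channels. -/
def IsExtremeChannel (m n : ℕ)
    (L : Matrix (Fin m) (Fin m) ℂ →ₗ[ℂ] Matrix (Fin n) (Fin n) ℂ) : Prop :=
  IsChannel m n L ∧
    ∀ L₁ L₂ : Matrix (Fin m) (Fin m) ℂ →ₗ[ℂ] Matrix (Fin n) (Fin n) ℂ,
      IsChannel m n L₁ → IsChannel m n L₂ → ∀ t : ℝ, 0 < t → t < 1 →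
      L = (t : ℂ) • L₁ + ((1 - t : ℝ) : ℂ) • L₂ → L₁ = L ∧ L₂ = L

/-- The column-stacking vector `(i, p) ↦ A p i` of a matrix `A`. -/
def choiVec {m n : ℕ} (A : Matrix (Fin n) (Fin m) ℂ) : Fin m × Fin n → ℂ :=
  fun ip => A ip.2 ip.1

/-- The entries of `A * E_{ij} * Aᴴ` are those of the rank-one matrix of `choiVec A`. -/
theorem mul_single_mul_conjTranspose_apply {m n : ℕ} (A : Matrix (Fin n) (Fin m) ℂ)
    (i j : Fin m) (p q : Fin n) :
    (A * Matrix.single i j (1 : ℂ) * Aᴴ) p q =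
      vecMulVec (choiVec A) (star (choiVec A)) (i, p) (j, q) := by
  simp [Matrix.mul_apply, Matrix.single_apply, vecMulVec_apply, choiVec, ite_and]

/-- Kraus representations of `L` correspond to decompositions of its Choi matrix into
rank-one positive semidefinite matrices. -/
theorem kraus_iff_choi_eq_sum_vecMulVec {m n k : ℕ}
    (L : Matrix (Fin m) (Fin m) ℂ →ₗ[ℂ] Matrix (Fin n) (Fin n) ℂ)
    (A : Fin k → Matrix (Fin n) (Fin m) ℂ) :
    (∀ X, L X = ∑ l, A l * X * (A l)ᴴ) ↔
      choi m n L = ∑ l, vecMulVec (choiVec (A l)) (star (choiVec (A l))) := by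
  constructor
  · intro h
    ext ⟨i, p⟩ ⟨j, q⟩
    simp only [choi, Matrix.of_apply, h, Matrix.sum_apply, mul_single_mul_conjTranspose_apply]
  · intro h
    let K : Matrix (Fin m) (Fin m) ℂ →ₗ[ℂ] Matrix (Fin n) (Fin n) ℂ :=
      ∑ l, mulRightLinearMap (Fin n) ℂ (A l)ᴴ ∘ₗ mulLeftLinearMap (Fin m) ℂ (A l)
    have hK : ∀ X, K X = ∑ l, A l * X * (A l)ᴴ := fun X => by simp [K]
    suffices L = K from fun X => by rw [this, hK]
    refine Matrix.ext_linearMap _ fun i j => LinearMap.ext_ring ?_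
    ext p q
    have hpq := congrFun (congrFun h (i, p)) (j, q)
    simp only [choi, Matrix.of_apply, Matrix.sum_apply] at hpq
    simp [hK, hpq, Matrix.sum_apply, mul_single_mul_conjTranspose_apply]

/-- `L` admits a Kraus representation (with `k ≥ 1`) iff its Choi matrix is
positive semidefinite. -/
theorem stmt0 (m n : ℕ) (L : Matrix (Fin m) (Fin m) ℂ →ₗ[ℂ] Matrix (Fin n) (Fin n) ℂ) :
    (∃ k : ℕ, 1 ≤ k ∧ ∃ A : Fin k → Matrix (Fin n) (Fin m) ℂ,
      ∀ X, L X = ∑ i, A i * X * (A i)ᴴ) ↔ (choi m n L).PosSemidef := by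
  constructor
  · rintro ⟨k, -, A, hA⟩
    rw [(kraus_iff_choi_eq_sum_vecMulVec L A).1 hA]
    exact posSemidef_sum _ fun l _ => posSemidef_vecMulVec_self_star _
  · intro h
    obtain ⟨k, v, hv⟩ := posSemidef_iff_eq_sum_vecMulVec.1 h
    let A : Fin k → Matrix (Fin n) (Fin m) ℂ := fun l => Matrix.of fun p i => v l (i, p)
    have hA := (kraus_iff_choi_eq_sum_vecMulVec L A).2 hv
    -- a zero Kraus operator is added so that there is at least one
    exact ⟨k + 1, by omega, Fin.cons 0 A, fun X => by simp [Fin.sum_univ_succ, hA X]⟩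
end

section
/- Suppose a linear map L from m×m to n×n complex matrices is given by L(X) = ∑_{i=1}^k A_i X A_i^* where the matrices A_1,…,A_k ∈ ℂ^{n×m} are nonzero and satisfy tr(A_j^* A_i) = 0 for all i ≠ j. Then rank Z(L) = k, and for each i the vector â_i ∈ ℂ^{mn} obtained by stacking the columns of A_i (the entry of â_i at index (j,p) is the (p,j) entry of A_i) is an eigenvector of Z(L) with eigenvalue tr(A_i^* A_i); moreover these k vectors are pairwise orthogonal. -/
open Matrix
open scoped ComplexOrder

/-- The matrix whose `i`-th column is the vectorization of `A i`, obtained by stacking columns. -/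
def vecCols {ι m n : Type*} (A : ι → Matrix n m ℂ) : Matrix (m × n) ι ℂ :=
  Matrix.of fun jp i => A i jp.2 jp.1

theorem conjTranspose_vecCols_mul_vecCols_apply {ι m n : Type*} [Fintype m] [Fintype n]
    (A : ι → Matrix n m ℂ) (i j : ι) :
    ((vecCols A)ᴴ * vecCols A) i j = Matrix.trace ((A i)ᴴ * A j) := by
  simp [vecCols, Matrix.mul_apply, Matrix.trace, Fintype.sum_prod_type]

theorem conjTranspose_vecCols_mul_vecCols {ι m n : Type*} [DecidableEq ι] [Fintype m] [Fintype n]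
    (A : ι → Matrix n m ℂ) (horth : ∀ i j, i ≠ j → Matrix.trace ((A j)ᴴ * A i) = 0) :
    (vecCols A)ᴴ * vecCols A = Matrix.diagonal fun i => Matrix.trace ((A i)ᴴ * A i) := by
  ext i j
  rw [conjTranspose_vecCols_mul_vecCols_apply]
  by_cases h : i = j
  · subst h
    simp
  · rw [Matrix.diagonal_apply_ne _ h, horth j i (Ne.symm h)]

theorem choi_eq_vecCols_mul_conjTranspose {m n : ℕ} {ι : Type*} [Fintype ι]
    (A : ι → Matrix (Fin n) (Fin m) ℂ)
    (L : Matrix (Fin m) (Fin m) ℂ →ₗ[ℂ] Matrix (Fin n) (Fin n) ℂ)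
    (hL : ∀ X, L X = ∑ i, A i * X * (A i)ᴴ) :
    choi m n L = vecCols A * (vecCols A)ᴴ := by
  ext ⟨i, p⟩ ⟨j, q⟩
  simp only [choi, vecCols, Matrix.of_apply, hL, Matrix.sum_apply, Matrix.mul_apply,
    Matrix.conjTranspose_apply]
  refine Finset.sum_congr rfl fun l _ => ?_
  rw [Finset.sum_eq_single j, Finset.sum_eq_single i]
  · simp
  · intro b _ hb
    simp [hb.symm]
  · simp
  · intro b _ hb
    simp [hb.symm]
  · simp

/-- if `L(X) = ∑ Aᵢ X Aᵢ*` with the `Aᵢ` nonzero and pairwise trace-orthogonal,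
then `rank Z(L) = k`, each vectorization `âᵢ` is an eigenvector of `Z(L)` with eigenvalue
`tr(Aᵢ* Aᵢ)`, and these vectors are pairwise orthogonal. -/
theorem stmt3 (m n k : ℕ) (A : Fin k → Matrix (Fin n) (Fin m) ℂ)
    (L : Matrix (Fin m) (Fin m) ℂ →ₗ[ℂ] Matrix (Fin n) (Fin n) ℂ)
    (hL : ∀ X, L X = ∑ i, A i * X * (A i)ᴴ)
    (hA : ∀ i, A i ≠ 0)
    (horth : ∀ i j, i ≠ j → Matrix.trace ((A j)ᴴ * A i) = 0) :
    (choi m n L).rank = k ∧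
    (∀ i, (choi m n L).mulVec (fun jp : Fin m × Fin n => A i jp.2 jp.1) =
        Matrix.trace ((A i)ᴴ * A i) • (fun jp : Fin m × Fin n => A i jp.2 jp.1)) ∧
    (∀ i j, i ≠ j →
      dotProduct (star (fun jp : Fin m × Fin n => A i jp.2 jp.1))
        (fun jp : Fin m × Fin n => A j jp.2 jp.1) = 0) := by
  have hZ := choi_eq_vecCols_mul_conjTranspose A L hL
  have hG := conjTranspose_vecCols_mul_vecCols A horth
  refine ⟨?_, fun i => ?_, fun i j hij => ?_⟩
  · have hd : ∀ i, Matrix.trace ((A i)ᴴ * A i) ≠ 0 := fun i h =>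
      hA i (Matrix.trace_conjTranspose_mul_self_eq_zero_iff.mp h)
    rw [hZ, Matrix.rank_self_mul_conjTranspose, ← Matrix.rank_conjTranspose_mul_self, hG,
      Matrix.rank_diagonal]
    simp [hd]
  · have hcol : (fun jp : Fin m × Fin n => A i jp.2 jp.1) = vecCols A *ᵥ Pi.single i 1 := by
      ext jp
      simp [vecCols]
    rw [hZ, hcol, Matrix.mulVec_mulVec, Matrix.mul_assoc, hG, ← Matrix.mulVec_mulVec,
      Matrix.diagonal_mulVec_single, ← Matrix.mulVec_smul, ← Pi.single_smul, smul_eq_mul]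
  · rw [← horth j i hij.symm, ← conjTranspose_vecCols_mul_vecCols_apply]
    rfl
end

section
/- Let L be a linear map from m×m to n×n complex matrices. Then L is a quantum channel, i.e. L admits a Kraus representation L(X) = ∑_{i=1}^k A_i X A_i^* with ∑_{i=1}^k A_i^* A_i = I_m, if and only if the Choi matrix Z(L) is positive semidefinite and tr(L(E_{ij})) = δ_{ij} for all i,j ∈ {1,…,m} (equivalently, the trace of the (i,j) block of Z(L) equals δ_{ij}). -/
open Matrix
open scoped ComplexOrder

theorem Matrix.mul_single_one_mul_conjTranspose_apply {m n : Type*} [Fintype m] [DecidableEq m]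
    (A : Matrix n m ℂ) (i j : m) (p q : n) :
    (A * Matrix.single i j (1 : ℂ) * Aᴴ) p q = A p i * star (A q j) := by
  simp [Matrix.mul_apply, Matrix.single_apply, ite_and, Finset.sum_ite_eq]

/-- A family `A` is a Kraus family of `L` iff the Choi matrix of `L` is `V * Vᴴ`, where the columns
of `V` are the vectorizations of the matrices `A k`. -/
theorem forall_eq_sum_kraus_iff_choi_eq {m n k : ℕ}
    (L : Matrix (Fin m) (Fin m) ℂ →ₗ[ℂ] Matrix (Fin n) (Fin n) ℂ)
    (A : Fin k → Matrix (Fin n) (Fin m) ℂ) :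
    (∀ X, L X = ∑ l, A l * X * (A l)ᴴ) ↔
      choi m n L = (Matrix.of fun (ip : Fin m × Fin n) l => A l ip.2 ip.1) *
        (Matrix.of fun (ip : Fin m × Fin n) l => A l ip.2 ip.1)ᴴ := by
  constructor
  · intro h
    ext ⟨i, p⟩ ⟨j, q⟩
    simp only [choi, Matrix.of_apply, h, Matrix.sum_apply,
      Matrix.mul_single_one_mul_conjTranspose_apply]
    simp only [Matrix.mul_apply, Matrix.conjTranspose_apply, Matrix.of_apply]
  · intro h X
    let K : Matrix (Fin m) (Fin m) ℂ →ₗ[ℂ] Matrix (Fin n) (Fin n) ℂ :=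
      { toFun := fun X => ∑ l, A l * X * (A l)ᴴ
        map_add' := fun X Y => by simp [Matrix.mul_add, Matrix.add_mul, Finset.sum_add_distrib]
        map_smul' := fun c X => by simp [Finset.smul_sum] }
    suffices hLK : L = K from congrArg (fun f => f X) hLK
    refine Matrix.ext_linearMap _ fun i j => LinearMap.ext_ring ?_
    ext p q
    have hpq := congrFun (congrFun h (i, p)) (j, q)
    simp only [choi, Matrix.of_apply, Matrix.mul_apply, Matrix.conjTranspose_apply] at hpq
    simp only [LinearMap.comp_apply, Matrix.singleLinearMap_apply, hpq, K, LinearMap.coe_mk,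
      AddHom.coe_mk, Matrix.sum_apply, Matrix.mul_single_one_mul_conjTranspose_apply]

theorem trace_sum_kraus_single {m n k : ℕ} (A : Fin k → Matrix (Fin n) (Fin m) ℂ) (i j : Fin m) :
    Matrix.trace (∑ l, A l * Matrix.single i j (1 : ℂ) * (A l)ᴴ) =
      (∑ l, (A l)ᴴ * A l) j i := by
  rw [Matrix.trace_sum, Matrix.sum_apply]
  refine Finset.sum_congr rfl fun l _ => ?_
  simp only [Matrix.trace, Matrix.diag_apply, Matrix.mul_single_one_mul_conjTranspose_apply,
    Matrix.mul_apply (M := (A l)ᴴ), Matrix.conjTranspose_apply, mul_comm]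

theorem forall_trace_eq_iff_sum_conjTranspose_mul_self_eq_one {m n k : ℕ}
    {L : Matrix (Fin m) (Fin m) ℂ →ₗ[ℂ] Matrix (Fin n) (Fin n) ℂ}
    {A : Fin k → Matrix (Fin n) (Fin m) ℂ} (h : ∀ X, L X = ∑ l, A l * X * (A l)ᴴ) :
    (∀ i j : Fin m, Matrix.trace (L (Matrix.single i j (1 : ℂ))) = if i = j then 1 else 0) ↔
      ∑ l, (A l)ᴴ * A l = 1 := by
  simp only [h, trace_sum_kraus_single, ← Matrix.ext_iff, Matrix.one_apply]
  rw [forall_comm]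
  simp only [eq_comm (a := (_ : Fin m))]

open scoped MatrixOrder Matrix.Norms.L2Operator in
theorem exists_kraus_of_posSemidef_choi {m n : ℕ}
    {L : Matrix (Fin m) (Fin m) ℂ →ₗ[ℂ] Matrix (Fin n) (Fin n) ℂ} (h : (choi m n L).PosSemidef) :
    ∃ (k : ℕ) (A : Fin k → Matrix (Fin n) (Fin m) ℂ), ∀ X, L X = ∑ l, A l * X * (A l)ᴴ := by
  obtain ⟨B, hB⟩ := CStarAlgebra.nonneg_iff_eq_star_mul_self.mp h.nonneg
  let e := Fintype.equivFin (Fin m × Fin n)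
  refine ⟨_, fun l => Matrix.of fun p i => star (B (e.symm l) (i, p)),
    (forall_eq_sum_kraus_iff_choi_eq L _).mpr ?_⟩
  rw [hB]
  ext ip jq
  simp only [Matrix.star_eq_conjTranspose, Matrix.mul_apply, Matrix.conjTranspose_apply,
    Matrix.of_apply, star_star]
  exact (e.symm.sum_comp fun x => star (B x ip) * B x jq).symm

/-- `L` is a quantum channel iff `Z(L)` is positive semidefinite and the trace of
each block `L(E_{ij})` equals `δ_{ij}`. -/
theorem stmt4 (m n : ℕ) (L : Matrix (Fin m) (Fin m) ℂ →ₗ[ℂ] Matrix (Fin n) (Fin n) ℂ) :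
    IsChannel m n L ↔
      ((choi m n L).PosSemidef ∧
        ∀ i j : Fin m,
          Matrix.trace (L (Matrix.single i j (1 : ℂ))) =
            if i = j then 1 else 0) := by
  constructor
  · rintro ⟨k, A, hL, hA⟩
    refine ⟨?_, (forall_trace_eq_iff_sum_conjTranspose_mul_self_eq_one hL).mpr hA⟩
    rw [(forall_eq_sum_kraus_iff_choi_eq L A).mp hL]
    exact Matrix.posSemidef_self_mul_conjTranspose _
  · rintro ⟨hZ, htr⟩
    obtain ⟨k, A, hL⟩ := exists_kraus_of_posSemidef_choi hZ
    exact ⟨k, A, hL, (forall_trace_eq_iff_sum_conjTranspose_mul_self_eq_one hL).mp htr⟩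
end

section
/- Let L be an extreme point of the convex set L_{m,n} of quantum channels from m×m to n×n complex matrices. Then rank Z(L) ≤ m. -/
open Matrix
open scoped ComplexOrder

/-- The Choi rank is at most the number of Kraus operators. -/
lemma choi_rank_le_of_kraus {m n k : ℕ}
    {L : Matrix (Fin m) (Fin m) ℂ →ₗ[ℂ] Matrix (Fin n) (Fin n) ℂ}
    (A : Fin k → Matrix (Fin n) (Fin m) ℂ) (hA : ∀ X, L X = ∑ i, A i * X * (A i)ᴴ) :
    (choi m n L).rank ≤ k := by
  let V : Matrix (Fin m × Fin n) (Fin k) ℂ := Matrix.of fun ip l => A l ip.2 ip.1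
  have hV : choi m n L = V * Vᴴ := by
    ext ⟨i, p⟩ ⟨j, q⟩
    simp [choi, hA, V, Matrix.sum_apply, Matrix.mul_apply, Matrix.single_apply, ite_and]
  rw [hV]
  exact (Matrix.rank_mul_le_left _ _).trans (by simpa using Matrix.rank_le_card_width V)

/-- More than `m` matrices with `m` columns satisfy a nontrivial Hermitian relation among the
products `(A i)ᴴ * A j`. -/
lemma exists_hermitian_relation {m n k : ℕ} (A : Fin k → Matrix (Fin n) (Fin m) ℂ) (hk : m < k) :
    ∃ H : Matrix (Fin k) (Fin k) ℂ, H.IsHermitian ∧ H ≠ 0 ∧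
      ∑ i, ∑ j, H i j • ((A i)ᴴ * A j) = 0 := by
  let φ : Matrix (Fin k) (Fin k) ℂ →ₗ[ℂ] Matrix (Fin m) (Fin m) ℂ :=
    { toFun := fun C => ∑ i, ∑ j, C i j • ((A i)ᴴ * A j)
      map_add' := fun C D => by simp [add_smul, Finset.sum_add_distrib]
      map_smul' := fun c C => by simp [mul_smul, Finset.smul_sum] }
  have hφ : ∀ C, φ Cᴴ = (φ C)ᴴ := fun C => by
    simp only [φ, LinearMap.coe_mk, AddHom.coe_mk, Matrix.conjTranspose_sum,
      Matrix.conjTranspose_smul, Matrix.conjTranspose_mul, Matrix.conjTranspose_conjTranspose,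
      Matrix.conjTranspose_apply]
    exact Finset.sum_comm
  have hker : LinearMap.ker φ ≠ ⊥ := by
    apply LinearMap.ker_ne_bot_of_finrank_lt
    simpa [Module.finrank_matrix] using Nat.mul_lt_mul'' hk hk
  obtain ⟨C, hC, hC0⟩ := Submodule.exists_mem_ne_zero_of_ne_bot hker
  rw [LinearMap.mem_ker] at hC
  by_cases h : C + Cᴴ = 0
  · refine ⟨Complex.I • C, ?_, smul_ne_zero Complex.I_ne_zero hC0, ?_⟩
    · have h' : Cᴴ = -C := (neg_eq_of_add_eq_zero_right h).symm
      simp [Matrix.IsHermitian, Matrix.conjTranspose_smul, h']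
    · change φ (Complex.I • C) = 0
      rw [map_smul, hC, smul_zero]
  · refine ⟨C + Cᴴ, ?_, h, ?_⟩
    · simp [Matrix.IsHermitian, add_comm]
    · change φ (C + Cᴴ) = 0
      rw [map_add, hφ, hC]
      simp

/-- After a unitary change of Kraus operators, the Hermitian relation becomes diagonal. -/
lemma exists_kraus_diagonal_relation {m n k : ℕ} (A : Fin k → Matrix (Fin n) (Fin m) ℂ)
    (hk : m < k) :
    ∃ (B : Fin k → Matrix (Fin n) (Fin m) ℂ) (d : Fin k → ℝ), d ≠ 0 ∧
      (∀ X : Matrix (Fin m) (Fin m) ℂ, ∑ i, B i * X * (B i)ᴴ = ∑ i, A i * X * (A i)ᴴ) ∧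
      ∑ i, (B i)ᴴ * B i = ∑ i, (A i)ᴴ * A i ∧
      ∑ i, (d i : ℂ) • ((B i)ᴴ * B i) = 0 := by
  obtain ⟨H, hH, hH0, hrel⟩ := exists_hermitian_relation A hk
  let U : Matrix (Fin k) (Fin k) ℂ := hH.eigenvectorUnitary
  have hU : U * Uᴴ = 1 := Unitary.coe_mul_star_self hH.eigenvectorUnitary
  have hspec : H = U * Matrix.diagonal (fun i => (hH.eigenvalues i : ℂ)) * Uᴴ := by
    exact hH.spectral_theorem
  have hUe : ∀ i j, ∑ l, U i l * star (U j l) = if i = j then 1 else 0 := fun i j => by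
    have := congrFun (congrFun hU i) j
    simpa [Matrix.mul_apply, Matrix.one_apply] using this
  have hHe : ∀ i j, ∑ l, (hH.eigenvalues l : ℂ) * (U i l * star (U j l)) = H i j := fun i j => by
    conv_rhs => rw [hspec]
    rw [Matrix.mul_apply]
    simp only [Matrix.mul_diagonal, Matrix.conjTranspose_apply]
    exact Finset.sum_congr rfl fun l _ => by ring
  let B : Fin k → Matrix (Fin n) (Fin m) ℂ := fun l => ∑ j, star (U j l) • A j
  have hB : ∀ l, (B l)ᴴ = ∑ i, U i l • (A i)ᴴ := fun l => by
    simp [B, Matrix.conjTranspose_sum, Matrix.conjTranspose_smul]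
  have hquad : ∀ c : Fin k → ℂ, ∑ l, c l • ((B l)ᴴ * B l) =
      ∑ i, ∑ j, (∑ l, c l * (U i l * star (U j l))) • ((A i)ᴴ * A j) := fun c => by
    simp only [hB, B, Matrix.sum_mul, Matrix.mul_sum, Finset.smul_sum, Finset.sum_smul,
      Matrix.smul_mul, Matrix.mul_smul, smul_smul]
    rw [Finset.sum_comm]
    refine (Finset.sum_congr rfl fun j _ => Finset.sum_comm).trans ?_
    rw [Finset.sum_comm]
    refine Finset.sum_congr rfl fun i _ => Finset.sum_congr rfl fun j _ =>
      Finset.sum_congr rfl fun l _ => ?_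
    congr 1
    ring
  refine ⟨B, hH.eigenvalues, ?_, fun X => ?_, ?_, ?_⟩
  · intro h
    exact hH0 (hH.eigenvalues_eq_zero_iff.mp h)
  · have : ∑ l, B l * X * (B l)ᴴ =
        ∑ i, ∑ j, (∑ l, U i l * star (U j l)) • (A j * X * (A i)ᴴ) := by
      simp only [hB, B, Matrix.sum_mul, Matrix.mul_sum, Finset.sum_smul, Finset.smul_sum,
        Matrix.smul_mul, Matrix.mul_smul, smul_smul]
      rw [Finset.sum_comm]
      exact Finset.sum_congr rfl fun i _ => Finset.sum_comm
    rw [this]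
    simp only [hUe]
    simp
  · have := hquad 1
    simpa only [Pi.one_apply, one_smul, one_mul, hUe, ite_smul, zero_smul, Finset.sum_ite_eq,
      Finset.mem_univ, if_true] using this
  · rw [hquad]
    simpa only [hHe] using hrel

/-- A nonzero real vector can be scaled to have sup norm one, attained with a positive sign. -/
lemma exists_scale_abs_le_one {k : ℕ} {d : Fin k → ℝ} (hd : d ≠ 0) :
    ∃ (c : ℝ) (i₀ : Fin k), c * d i₀ = 1 ∧ ∀ i, |c * d i| ≤ 1 := by
  obtain ⟨j, hj⟩ := Function.ne_iff.mp hd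
  obtain ⟨i₀, -, hi₀⟩ := Finset.exists_max_image Finset.univ (fun i => |d i|) ⟨j, Finset.mem_univ j⟩
  have hpos : 0 < |d i₀| := (abs_pos.mpr hj).trans_le (hi₀ j (Finset.mem_univ j))
  refine ⟨(d i₀)⁻¹, i₀, inv_mul_cancel₀ (abs_pos.mp hpos), fun i => ?_⟩
  rw [abs_mul, abs_inv, inv_mul_le_one₀ hpos]
  exact hi₀ i (Finset.mem_univ i)

/-- The map `X ↦ ∑ i, w i • (B i * X * (B i)ᴴ)`. -/
noncomputable def weightedKrausMap {m n k : ℕ} (B : Fin k → Matrix (Fin n) (Fin m) ℂ)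
    (w : Fin k → ℝ) : Matrix (Fin m) (Fin m) ℂ →ₗ[ℂ] Matrix (Fin n) (Fin n) ℂ where
  toFun X := ∑ i, (w i : ℂ) • (B i * X * (B i)ᴴ)
  map_add' X Y := by simp [Matrix.mul_add, Matrix.add_mul, Finset.sum_add_distrib]
  map_smul' c X := by simp [Finset.smul_sum, smul_comm c]

lemma weightedKrausMap_apply_eq_sum_sqrt {m n k : ℕ} (B : Fin k → Matrix (Fin n) (Fin m) ℂ)
    {w : Fin k → ℝ} (hw : ∀ i, 0 ≤ w i) (X : Matrix (Fin m) (Fin m) ℂ) :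
    weightedKrausMap B w X =
      ∑ i, (((√(w i) : ℝ) : ℂ) • B i) * X * (((√(w i) : ℝ) : ℂ) • B i)ᴴ := by
  change ∑ i, (w i : ℂ) • (B i * X * (B i)ᴴ) = _
  refine Finset.sum_congr rfl fun i _ => ?_
  simp [Matrix.conjTranspose_smul, smul_smul, Real.mul_self_sqrt (hw i)]

lemma sum_sqrt_smul_conjTranspose_mul {m n k : ℕ} (B : Fin k → Matrix (Fin n) (Fin m) ℂ)
    {w : Fin k → ℝ} (hw : ∀ i, 0 ≤ w i) :
    ∑ i, (((√(w i) : ℝ) : ℂ) • B i)ᴴ * (((√(w i) : ℝ) : ℂ) • B i) =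
      ∑ i, (w i : ℂ) • ((B i)ᴴ * B i) := by
  refine Finset.sum_congr rfl fun i _ => ?_
  simp [Matrix.conjTranspose_smul, smul_smul, Real.mul_self_sqrt (hw i)]

/-- A Kraus representation of an extreme channel with more than `m` operators can be shortened. -/
lemma IsExtremeChannel.exists_shorter_kraus {m n k : ℕ}
    {L : Matrix (Fin m) (Fin m) ℂ →ₗ[ℂ] Matrix (Fin n) (Fin n) ℂ}
    (hL : IsExtremeChannel m n L) (A : Fin k → Matrix (Fin n) (Fin m) ℂ)
    (hA : ∀ X, L X = ∑ i, A i * X * (A i)ᴴ) (hA1 : ∑ i, (A i)ᴴ * A i = 1) (hk : m < k) :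
    ∃ l < k, ∃ A' : Fin l → Matrix (Fin n) (Fin m) ℂ,
      (∀ X, L X = ∑ i, A' i * X * (A' i)ᴴ) ∧ ∑ i, (A' i)ᴴ * A' i = 1 := by
  obtain ⟨B, d, hd, hBL, hB1, hBd⟩ := exists_kraus_diagonal_relation A hk
  obtain ⟨c, i₀, hi₀, hc⟩ := exists_scale_abs_le_one hd
  have hsum : ∀ s : ℝ, ∑ i, ((1 + s * (c * d i) : ℝ) : ℂ) • ((B i)ᴴ * B i) = 1 := fun s => by
    have : ∑ i, ((1 + s * (c * d i) : ℝ) : ℂ) • ((B i)ᴴ * B i) =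
        ∑ i, (B i)ᴴ * B i + ((s * c : ℝ) : ℂ) • ∑ i, (d i : ℂ) • ((B i)ᴴ * B i) := by
      rw [Finset.smul_sum, ← Finset.sum_add_distrib]
      refine Finset.sum_congr rfl fun i _ => ?_
      rw [smul_smul, ← mul_assoc]
      push_cast
      rw [add_smul, one_smul]
    rw [this, hBd, hB1, hA1, smul_zero, add_zero]
  have hminus : ∀ i, 0 ≤ 1 + (-1) * (c * d i) := fun i => by linarith [(abs_le.mp (hc i)).2]
  have hplus : ∀ i, 0 ≤ 1 + 1 * (c * d i) := fun i => by linarith [(abs_le.mp (hc i)).1]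
  have hchan : ∀ s : ℝ, (∀ i, 0 ≤ 1 + s * (c * d i)) →
      IsChannel m n (weightedKrausMap B fun i => 1 + s * (c * d i)) := fun s hs =>
    ⟨k, _, weightedKrausMap_apply_eq_sum_sqrt B hs,
      (sum_sqrt_smul_conjTranspose_mul B hs).trans (hsum s)⟩
  have hLeq := (hL.2 _ _ (hchan (-1) hminus) (hchan 1 hplus) (1 / 2) (by norm_num) (by norm_num)
    (by
      refine LinearMap.ext fun X => ?_
      rw [hA, ← hBL]
      simp only [weightedKrausMap, LinearMap.add_apply, LinearMap.smul_apply, LinearMap.coe_mk,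
        AddHom.coe_mk, Finset.smul_sum, ← Finset.sum_add_distrib, smul_smul, ← add_smul]
      refine Finset.sum_congr rfl fun i _ => ?_
      conv_lhs => rw [← one_smul ℂ (B i * X * (B i)ᴴ)]
      congr 1
      push_cast
      ring)).1
  obtain ⟨l, rfl⟩ : ∃ l, k = l + 1 := ⟨k - 1, by omega⟩
  have hzero : √(1 + (-1) * (c * d i₀)) = 0 := by simp [hi₀]
  refine ⟨l, Nat.lt_succ_self l,
    fun i => ((√(1 + (-1) * (c * d (i₀.succAbove i))) : ℝ) : ℂ) • B (i₀.succAbove i),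
    fun X => ?_, ?_⟩
  · conv_lhs => rw [← hLeq, weightedKrausMap_apply_eq_sum_sqrt B hminus,
      Fin.sum_univ_succAbove _ i₀, hzero]
    simp
  · have := (sum_sqrt_smul_conjTranspose_mul B hminus).trans (hsum (-1))
    rw [Fin.sum_univ_succAbove _ i₀, hzero] at this
    simpa using this

/-- an extreme point of the set of quantum channels has Choi rank at most `m`. -/
theorem stmt5 (m n : ℕ) (L : Matrix (Fin m) (Fin m) ℂ →ₗ[ℂ] Matrix (Fin n) (Fin n) ℂ)
    (hL : IsExtremeChannel m n L) : (choi m n L).rank ≤ m := by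
  classical
  have hmin := Nat.find_spec hL.1
  obtain ⟨A, hA, hA1⟩ := hmin
  refine (choi_rank_le_of_kraus A hA).trans ?_
  by_contra! hk
  obtain ⟨l, hl, hl'⟩ := hL.exists_shorter_kraus A hA hA1 hk
  exact Nat.find_min hL.1 hl hl'
end

section
/- Let m,n ≥ 2 and let L ∈ L_{m,n} be a quantum channel with rank Z(L) ≤ m. Then L is an extreme point of L_{m,n} if and only if the only Hermitian mn×mn matrix W (with rows and columns indexed by pairs (i,p), i ∈ {1,…,m}, p ∈ {1,…,n}) satisfying both (a) every vector in the kernel of Z(L) lies in the kernel of W, and (b) the trace of every (i,j) block of W is zero (i.e. ∑_p W((i,p),(j,p)) = 0 for all i,j ∈ {1,…,m}), is W = 0. -/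
open Matrix
open scoped ComplexOrder

/-- The linear map with a prescribed Choi matrix. -/
def ofChoi {m n : ℕ} (Z : Matrix (Fin m × Fin n) (Fin m × Fin n) ℂ) :
    Matrix (Fin m) (Fin m) ℂ →ₗ[ℂ] Matrix (Fin n) (Fin n) ℂ where
  toFun X := Matrix.of fun p q => ∑ i, ∑ j, X i j * Z (i, p) (j, q)
  map_add' X Y := by
    ext p q
    simp [add_mul, Finset.sum_add_distrib]
  map_smul' c X := by
    ext p q
    simp [Finset.mul_sum, mul_assoc]

lemma choi_ofChoi {m n : ℕ} (Z : Matrix (Fin m × Fin n) (Fin m × Fin n) ℂ) :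
    choi m n (ofChoi Z) = Z := by
  ext ⟨i, p⟩ ⟨j, q⟩
  simp [choi, ofChoi, Matrix.single_apply, ite_and]

lemma apply_eq_sum_choi {m n : ℕ}
    (L : Matrix (Fin m) (Fin m) ℂ →ₗ[ℂ] Matrix (Fin n) (Fin n) ℂ)
    (X : Matrix (Fin m) (Fin m) ℂ) (p q : Fin n) :
    L X p q = ∑ i, ∑ j, X i j * choi m n L (i, p) (j, q) := by
  conv_lhs => rw [Matrix.matrix_eq_sum_single X]
  simp only [map_sum, Matrix.sum_apply, choi, Matrix.of_apply]
  refine Finset.sum_congr rfl fun i _ => Finset.sum_congr rfl fun j _ => ?_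
  have h : Matrix.single i j (X i j) = X i j • Matrix.single i j (1 : ℂ) := by
    simp [Matrix.smul_single]
  rw [h, map_smul, Matrix.smul_apply, smul_eq_mul]

lemma choi_injective {m n : ℕ} : Function.Injective (choi m n) := by
  intro L L' h
  ext X p q
  rw [apply_eq_sum_choi, apply_eq_sum_choi, h]

open scoped MatrixOrder Matrix.Norms.L2Operator in
/-- A linear map is a channel iff its Choi matrix is positive semidefinite and its matrix of
block traces is the identity. -/
lemma isChannel_iff_choi {m n : ℕ}
    {L : Matrix (Fin m) (Fin m) ℂ →ₗ[ℂ] Matrix (Fin n) (Fin n) ℂ} :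
    IsChannel m n L ↔ (choi m n L).PosSemidef ∧
      ∀ i j, ∑ p, choi m n L (i, p) (j, p) = (1 : Matrix (Fin m) (Fin m) ℂ) i j := by
  constructor
  · rintro ⟨k, A, hA, hA'⟩
    have hZ : ∀ i p j q, choi m n L (i, p) (j, q) = ∑ l, A l p i * star (A l q j) := by
      intro i p j q
      simp [choi, hA, Matrix.sum_apply, Matrix.mul_apply, Matrix.single_apply, ite_and]
    constructor
    · have : choi m n L =
          (Matrix.of fun (l : Fin k) (x : Fin m × Fin n) => star (A l x.2 x.1))ᴴ *
          (Matrix.of fun (l : Fin k) (x : Fin m × Fin n) => star (A l x.2 x.1)) := by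
        ext ⟨i, p⟩ ⟨j, q⟩
        rw [hZ]
        simp [Matrix.mul_apply]
      rw [this]
      exact Matrix.posSemidef_conjTranspose_mul_self _
    · intro i j
      have h := congrFun (congrFun hA' j) i
      rw [← Matrix.transpose_one, Matrix.transpose_apply, ← h]
      simp only [hZ, Matrix.sum_apply, Matrix.mul_apply, Matrix.conjTranspose_apply]
      rw [Finset.sum_comm]
      exact Finset.sum_congr rfl fun _ _ => Finset.sum_congr rfl fun _ _ => mul_comm _ _
  · rintro ⟨hpos, htr⟩
    obtain ⟨B, hB⟩ := CStarAlgebra.nonneg_iff_eq_star_mul_self.mp hpos.nonneg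
    let e := (finProdFinEquiv : Fin m × Fin n ≃ Fin (m * n))
    have hZ : ∀ i p j q, choi m n L (i, p) (j, q) =
        ∑ l, star (B (e.symm l) (i, p)) * B (e.symm l) (j, q) := by
      intro i p j q
      rw [hB, Matrix.star_eq_conjTranspose, Matrix.mul_apply, ← e.symm.sum_comp]
      rfl
    refine ⟨m * n, fun l => Matrix.of fun p i => star (B (e.symm l) (i, p)), ?_, ?_⟩
    · intro X
      ext p q
      rw [apply_eq_sum_choi]
      simp only [hZ, Matrix.sum_apply, Matrix.mul_apply, Matrix.conjTranspose_apply,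
        Matrix.of_apply, star_star, Finset.mul_sum, Finset.sum_mul]
      rw [Finset.sum_comm]
      refine (Finset.sum_congr rfl fun _ _ => Finset.sum_comm).trans ?_
      rw [Finset.sum_comm]
      refine Finset.sum_congr rfl fun _ _ => ?_
      refine Finset.sum_congr rfl fun _ _ => Finset.sum_congr rfl fun _ _ => ?_
      ring
    · ext i j
      rw [← Matrix.transpose_one, Matrix.transpose_apply, ← htr j i]
      simp only [hZ, Matrix.sum_apply, Matrix.mul_apply, Matrix.conjTranspose_apply,
        Matrix.of_apply, star_star]
      rw [Finset.sum_comm]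
      exact Finset.sum_congr rfl fun _ _ => Finset.sum_congr rfl fun _ _ => mul_comm _ _

/-- A small Hermitian perturbation of the identity is positive semidefinite. -/
lemma Matrix.IsHermitian.exists_pos_one_add_smul_posSemidef {ι : Type*} [Fintype ι]
    [DecidableEq ι] {K : Matrix ι ι ℂ} (hK : K.IsHermitian) :
    ∃ ε : ℝ, 0 < ε ∧ (1 + (ε : ℂ) • K).PosSemidef ∧ (1 - (ε : ℂ) • K).PosSemidef := by
  set U : Matrix ι ι ℂ := (hK.eigenvectorUnitary : Matrix ι ι ℂ)
  have hUU : U * Uᴴ = 1 := Unitary.mul_star_self_of_mem hK.eigenvectorUnitary.2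
  have hKU : K = U * diagonal (fun i => (hK.eigenvalues i : ℂ)) * Uᴴ := by
    conv_lhs => rw [hK.spectral_theorem]
    rfl
  set s : ℝ := 1 + ∑ i, |hK.eigenvalues i|
  have hs0 : 0 < s := by positivity
  have hle : ∀ i, |s⁻¹ * hK.eigenvalues i| ≤ 1 := by
    intro i
    have := Finset.single_le_sum (f := fun i => |hK.eigenvalues i|)
      (fun i _ => abs_nonneg _) (Finset.mem_univ i)
    rw [abs_mul, abs_of_pos (inv_pos.mpr hs0), inv_mul_le_iff₀ hs0]
    linarith
  refine ⟨s⁻¹, inv_pos.mpr hs0, ?_, ?_⟩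
  · have : 1 + ((s⁻¹ : ℝ) : ℂ) • K =
        U * diagonal (fun i => ((1 + s⁻¹ * hK.eigenvalues i : ℝ) : ℂ)) * Uᴴ := by
      have hd : diagonal (fun i => ((1 + s⁻¹ * hK.eigenvalues i : ℝ) : ℂ)) =
          1 + ((s⁻¹ : ℝ) : ℂ) • diagonal (fun i => (hK.eigenvalues i : ℂ)) := by
        rw [← diagonal_one, ← diagonal_smul, diagonal_add]
        congr 1
        ext i
        simp
      rw [hd, mul_add, add_mul, mul_one, hUU, Matrix.mul_smul, Matrix.smul_mul, ← hKU]
    rw [this]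
    refine (PosSemidef.diagonal fun i => ?_).mul_mul_conjTranspose_same U
    have := (abs_le.mp (hle i)).1
    exact Complex.zero_le_real.mpr (by linarith)
  · have : 1 - ((s⁻¹ : ℝ) : ℂ) • K =
        U * diagonal (fun i => ((1 - s⁻¹ * hK.eigenvalues i : ℝ) : ℂ)) * Uᴴ := by
      have hd : diagonal (fun i => ((1 - s⁻¹ * hK.eigenvalues i : ℝ) : ℂ)) =
          1 - ((s⁻¹ : ℝ) : ℂ) • diagonal (fun i => (hK.eigenvalues i : ℂ)) := by
        rw [← diagonal_one, ← diagonal_smul, diagonal_sub]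
        congr 1
        ext i
        simp
      rw [hd, mul_sub, sub_mul, mul_one, hUU, Matrix.mul_smul, Matrix.smul_mul, ← hKU]
    rw [this]
    refine (PosSemidef.diagonal fun i => ?_).mul_mul_conjTranspose_same U
    have := (abs_le.mp (hle i)).2
    exact Complex.zero_le_real.mpr (by linarith)

/-- If `Z` is positive semidefinite and `W` is Hermitian with `ker Z ≤ ker W`, then
`Z = S Sᴴ` and `W = S K Sᴴ` for some matrix `S` and some Hermitian `K`. -/
lemma Matrix.PosSemidef.exists_mul_conjTranspose_factorization {ι : Type*} [Fintype ι] [DecidableEq ι]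
    {Z W : Matrix ι ι ℂ} (hZ : Z.PosSemidef) (hW : W.IsHermitian)
    (hker : ∀ v, Z *ᵥ v = 0 → W *ᵥ v = 0) :
    ∃ S K : Matrix ι ι ℂ, K.IsHermitian ∧ Z = S * Sᴴ ∧ W = S * K * Sᴴ := by
  set U : Matrix ι ι ℂ := (hZ.1.eigenvectorUnitary : Matrix ι ι ℂ)
  have hUU : U * Uᴴ = 1 := Unitary.mul_star_self_of_mem hZ.1.eigenvectorUnitary.2
  have hUU' : Uᴴ * U = 1 := Unitary.star_mul_self_of_mem hZ.1.eigenvectorUnitary.2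
  set d := hZ.1.eigenvalues
  have hd0 : ∀ i, 0 ≤ d i := hZ.eigenvalues_nonneg
  have hZU : Z = U * diagonal (fun i => (d i : ℂ)) * Uᴴ := by
    conv_lhs => rw [hZ.1.spectral_theorem]
    rfl
  set D : Matrix ι ι ℂ := diagonal fun i => ((√(d i) : ℝ) : ℂ) with hD
  set E : Matrix ι ι ℂ := diagonal fun i => (((√(d i))⁻¹ : ℝ) : ℂ) with hE
  have hDH : Dᴴ = D := by
    rw [hD, diagonal_conjTranspose]
    congr 1
    ext i
    simp
  have hEH : Eᴴ = E := by
    rw [hE, diagonal_conjTranspose]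
    congr 1
    ext i
    simp
  have hDD : D * D = diagonal (fun i => (d i : ℂ)) := by
    rw [hD, diagonal_mul_diagonal]
    congr 1
    ext i
    rw [← Complex.ofReal_mul, Real.mul_self_sqrt (hd0 i)]
  have hcomm : D * E = E * D := by
    simp only [hD, hE, diagonal_mul_diagonal, mul_comm]
  have hDED : D * (E * D) = D := by
    rw [hD, hE, diagonal_mul_diagonal, diagonal_mul_diagonal]
    congr 1
    ext i
    rw [← Complex.ofReal_mul, ← Complex.ofReal_mul, ← mul_assoc]
    by_cases h : √(d i) = 0
    · simp [h]
    · rw [mul_inv_cancel₀ h, one_mul]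
  have hZP : Z * (U * (1 - E * D)) = 0 := by
    rw [hZU, ← hDD]
    calc U * (D * D) * Uᴴ * (U * (1 - E * D))
        = U * (D * D) * (Uᴴ * U) * (1 - E * D) := by simp only [mul_assoc]
      _ = U * D * (D - D * (E * D)) := by rw [hUU']; noncomm_ring
      _ = 0 := by rw [hDED, sub_self, mul_zero]
  have hWP : W * (U * (1 - E * D)) = 0 := by
    ext i j
    have := hker ((U * (1 - E * D)).col j) (by
      ext i
      exact congrFun (congrFun hZP i) j)
    exact congrFun this i
  have hWU : W * U = W * U * E * D := by
    have : W * (U * (1 - E * D)) = W * U - W * U * E * D := by noncomm_ring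
    rwa [this, sub_eq_zero] at hWP
  have hUW : Uᴴ * W = D * E * Uᴴ * W := by
    have := congrArg (fun M => Mᴴ) hWU
    simpa only [conjTranspose_mul, hW.eq, hDH, hEH, mul_assoc] using this
  refine ⟨U * D, E * (Uᴴ * W * U) * E, ?_, ?_, ?_⟩
  · rw [IsHermitian]
    simp only [conjTranspose_mul, conjTranspose_conjTranspose, hW.eq, hEH, mul_assoc]
  · rw [conjTranspose_mul, hDH, hZU, ← hDD]
    simp only [mul_assoc]
  · rw [conjTranspose_mul, hDH]
    calc W = (U * Uᴴ) * W * (U * Uᴴ) := by rw [hUU, one_mul, mul_one]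
      _ = U * (Uᴴ * W) * U * Uᴴ := by simp only [mul_assoc]
      _ = U * (D * E * Uᴴ) * (W * U) * Uᴴ := by rw [hUW]; simp only [mul_assoc]
      _ = U * (D * E * Uᴴ) * (W * U * E * D) * Uᴴ := by rw [← hWU]
      _ = U * D * (E * (Uᴴ * W * U) * E) * (D * Uᴴ) := by simp only [mul_assoc]

lemma Matrix.PosSemidef.exists_pos_add_smul_posSemidef {ι : Type*} [Fintype ι] [DecidableEq ι]
    {Z W : Matrix ι ι ℂ} (hZ : Z.PosSemidef) (hW : W.IsHermitian)
    (hker : ∀ v, Z *ᵥ v = 0 → W *ᵥ v = 0) :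
    ∃ ε : ℝ, 0 < ε ∧ (Z + (ε : ℂ) • W).PosSemidef ∧ (Z - (ε : ℂ) • W).PosSemidef := by
  obtain ⟨S, K, hK, rfl, rfl⟩ := hZ.exists_mul_conjTranspose_factorization hW hker
  obtain ⟨ε, hε, hadd, hsub⟩ := hK.exists_pos_one_add_smul_posSemidef
  refine ⟨ε, hε, ?_, ?_⟩
  · convert hadd.mul_mul_conjTranspose_same S using 1
    simp [mul_add, add_mul]
  · convert hsub.mul_mul_conjTranspose_same S using 1
    simp [mul_sub, sub_mul]

/-- The kernel of a positive combination of positive semidefinite matrices lies in the kernel of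
each of them. -/
lemma Matrix.PosSemidef.mulVec_eq_zero_of_smul_add_smul {ι : Type*} [Fintype ι]
    {Z₁ Z₂ : Matrix ι ι ℂ} (h₁ : Z₁.PosSemidef) (h₂ : Z₂.PosSemidef) {a b : ℝ}
    (ha : 0 < a) (hb : 0 ≤ b) {v : ι → ℂ}
    (hv : ((a : ℂ) • Z₁ + (b : ℂ) • Z₂) *ᵥ v = 0) : Z₁ *ᵥ v = 0 := by
  classical
  have h := congrArg (star v ⬝ᵥ ·) hv
  simp only [add_mulVec, smul_mulVec, dotProduct_add, dotProduct_smul, dotProduct_zero,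
    smul_eq_mul] at h
  have ha' : (0 : ℂ) < a := Complex.zero_lt_real.mpr ha
  have hb' : (0 : ℂ) ≤ b := Complex.zero_le_real.mpr hb
  have h1 := (add_eq_zero_iff_of_nonneg (mul_nonneg ha'.le (h₁.dotProduct_mulVec_nonneg v))
    (mul_nonneg hb' (h₂.dotProduct_mulVec_nonneg v))).mp h
  exact (h₁.dotProduct_mulVec_zero_iff v).mp ((mul_eq_zero.mp h1.1).resolve_left ha'.ne')

/-- for `m,n ≥ 2` and a channel `L` with `rank Z(L) ≤ m`, `L` is extreme iff the
only Hermitian `W` vanishing on the kernel of `Z(L)` and with all block traces zero is `W = 0`. -/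
theorem stmt6 (m n : ℕ) (hm : 2 ≤ m) (hn : 2 ≤ n)
    (L : Matrix (Fin m) (Fin m) ℂ →ₗ[ℂ] Matrix (Fin n) (Fin n) ℂ)
    (hL : IsChannel m n L) (hrank : (choi m n L).rank ≤ m) :
    IsExtremeChannel m n L ↔
      ∀ W : Matrix (Fin m × Fin n) (Fin m × Fin n) ℂ, W.IsHermitian →
        (∀ v : Fin m × Fin n → ℂ, (choi m n L).mulVec v = 0 → W.mulVec v = 0) →
        (∀ i j : Fin m, ∑ p : Fin n, W (i, p) (j, p) = 0) →
        W = 0 := by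
  obtain ⟨hpos, htr⟩ := isChannel_iff_choi.mp hL
  constructor
  · rintro ⟨-, hext⟩ W hW hker hWtr
    obtain ⟨ε, hε, hadd, hsub⟩ := hpos.exists_pos_add_smul_posSemidef hW hker
    have h₁ : IsChannel m n (ofChoi (choi m n L + (ε : ℂ) • W)) := by
      rw [isChannel_iff_choi, choi_ofChoi]
      refine ⟨hadd, fun i j => ?_⟩
      simp [Finset.sum_add_distrib, ← Finset.mul_sum, htr, hWtr]
    have h₂ : IsChannel m n (ofChoi (choi m n L - (ε : ℂ) • W)) := by
      rw [isChannel_iff_choi, choi_ofChoi]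
      refine ⟨hsub, fun i j => ?_⟩
      simp [Finset.sum_sub_distrib, ← Finset.mul_sum, htr, hWtr]
    have hmid : L = ((1 / 2 : ℝ) : ℂ) • ofChoi (choi m n L + (ε : ℂ) • W) +
        ((1 - 1 / 2 : ℝ) : ℂ) • ofChoi (choi m n L - (ε : ℂ) • W) := by
      apply choi_injective
      change _ = ((1 / 2 : ℝ) : ℂ) • choi m n (ofChoi (choi m n L + (ε : ℂ) • W)) +
        ((1 - 1 / 2 : ℝ) : ℂ) • choi m n (ofChoi (choi m n L - (ε : ℂ) • W))
      rw [choi_ofChoi, choi_ofChoi]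
      push_cast
      module
    have h := congrArg (choi m n) (hext _ _ h₁ h₂ _ (by norm_num) (by norm_num) hmid).1
    rw [choi_ofChoi, add_eq_left, smul_eq_zero] at h
    exact h.resolve_left (Complex.ofReal_ne_zero.mpr hε.ne')
  · intro h
    have key : ∀ L₁ L₂ : Matrix (Fin m) (Fin m) ℂ →ₗ[ℂ] Matrix (Fin n) (Fin n) ℂ,
        IsChannel m n L₁ → IsChannel m n L₂ → ∀ a b : ℝ, 0 < a → 0 ≤ b →
        L = (a : ℂ) • L₁ + (b : ℂ) • L₂ → L₁ = L := by
      intro L₁ L₂ hL₁ hL₂ a b ha hb hsum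
      obtain ⟨hpos₁, htr₁⟩ := isChannel_iff_choi.mp hL₁
      have hpos₂ := (isChannel_iff_choi.mp hL₂).1
      have hchoi : choi m n L = (a : ℂ) • choi m n L₁ + (b : ℂ) • choi m n L₂ := by
        rw [hsum]
        rfl
      refine choi_injective (sub_eq_zero.mp (h _ (hpos₁.1.sub hpos.1) (fun v hv => ?_)
        fun i j => ?_))
      · rw [sub_mulVec, hv, sub_zero]
        exact hpos₁.mulVec_eq_zero_of_smul_add_smul hpos₂ ha hb (hchoi ▸ hv)
      · simp [Finset.sum_sub_distrib, htr, htr₁]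
    refine ⟨hL, fun L₁ L₂ hL₁ hL₂ t ht0 ht1 hsum => ⟨?_, ?_⟩⟩
    · exact key L₁ L₂ hL₁ hL₂ t (1 - t) ht0 (by linarith) hsum
    · exact key L₂ L₁ hL₂ hL₁ (1 - t) t (by linarith) ht0.le (by rw [hsum, add_comm])
end

section
/- Let L ∈ L_{m,n} be a quantum channel given by L(X) = ∑_{i=1}^k A_i X A_i^* with A_1,…,A_k ∈ ℂ^{n×m} and ∑_{i=1}^k A_i^* A_i = I_m. If the k² matrices A_i^* A_j (i,j ∈ {1,…,k}) are linearly independent over ℂ, then L is an extreme point of L_{m,n}. Conversely, if L is an extreme point of L_{m,n} and A_1,…,A_k are linearly independent, then the k² matrices A_i^* A_j (i,j ∈ {1,…,k}) are linearly independent. -/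
open Matrix
open scoped ComplexOrder

/-- The completely positive map `X ↦ ∑ Bᵢ X Bᵢ*`. -/
def krausMap {m n k : ℕ} (B : Fin k → Matrix (Fin n) (Fin m) ℂ) :
    Matrix (Fin m) (Fin m) ℂ →ₗ[ℂ] Matrix (Fin n) (Fin n) ℂ where
  toFun X := ∑ i, B i * X * (B i)ᴴ
  map_add' X Y := by simp [Matrix.mul_add, Matrix.add_mul, Finset.sum_add_distrib]
  map_smul' c X := by simp [Finset.smul_sum]

theorem sum_conjTranspose_mul_self_comb {m n k r : ℕ} (A : Fin k → Matrix (Fin n) (Fin m) ℂ)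
    (C : Matrix (Fin r) (Fin k) ℂ) :
    ∑ l, (∑ i, C l i • A i)ᴴ * (∑ j, C l j • A j) =
      ∑ i, ∑ j, (Cᴴ * C) i j • ((A i)ᴴ * A j) := by
  simp only [conjTranspose_sum, conjTranspose_smul, Matrix.sum_mul, Matrix.mul_sum,
    Matrix.smul_mul, Matrix.mul_smul, Matrix.mul_apply, conjTranspose_apply,
    Finset.sum_smul, Finset.smul_sum, smul_smul]
  rw [Finset.sum_comm_cycle]
  refine Finset.sum_congr rfl fun i _ => Finset.sum_comm.trans ?_
  simp only [mul_comm]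

theorem sum_mul_mul_conjTranspose_comb {m n k r : ℕ} (A : Fin k → Matrix (Fin n) (Fin m) ℂ)
    (C : Matrix (Fin r) (Fin k) ℂ) (X : Matrix (Fin m) (Fin m) ℂ) :
    ∑ l, (∑ i, C l i • A i) * X * (∑ j, C l j • A j)ᴴ =
      ∑ i, ∑ j, (Cᴴ * C) j i • (A i * X * (A j)ᴴ) := by
  simp only [conjTranspose_sum, conjTranspose_smul, Matrix.sum_mul, Matrix.mul_sum,
    Matrix.smul_mul, Matrix.mul_smul, Matrix.mul_apply, conjTranspose_apply,
    Finset.sum_smul, Finset.smul_sum, smul_smul]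
  rw [Finset.sum_comm_cycle]
  exact Finset.sum_congr rfl fun i _ => Finset.sum_comm

/-- For a Kraus family, `∑ |f(Bᵢ)|²` depends linearly on the map it represents. -/
theorem sum_functional_mul_star {m n k : ℕ} (B : Fin k → Matrix (Fin n) (Fin m) ℂ)
    (L : Matrix (Fin m) (Fin m) ℂ →ₗ[ℂ] Matrix (Fin n) (Fin n) ℂ)
    (hL : ∀ X, L X = ∑ i, B i * X * (B i)ᴴ) (f : Matrix (Fin n) (Fin m) ℂ →ₗ[ℂ] ℂ) :
    ∑ i, f (B i) * star (f (B i)) =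
      ∑ p, ∑ a, ∑ q, ∑ b, f (single p a 1) * star (f (single q b 1)) *
        L (single a b 1) p q := by
  have hf (M : Matrix (Fin n) (Fin m) ℂ) : f M = ∑ p, ∑ a, M p a * f (single p a 1) := by
    conv_lhs => rw [matrix_eq_sum_single M]
    simp only [map_sum]
    refine Finset.sum_congr rfl fun p _ => Finset.sum_congr rfl fun a _ => ?_
    rw [← smul_eq_mul, ← map_smul, smul_single, smul_eq_mul, mul_one]
  have hentry (a b p q) : L (single a b 1) p q = ∑ i, B i p a * star (B i q b) := by
    rw [hL, Matrix.sum_apply]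
    refine Finset.sum_congr rfl fun i _ => ?_
    rw [Matrix.mul_assoc, Matrix.mul_apply]
    simp [Matrix.mul_apply, single_apply, ite_and]
  simp only [hentry, Finset.mul_sum]
  simp only [Finset.sum_comm (t := (Finset.univ : Finset (Fin k)))]
  refine Finset.sum_congr rfl fun i _ => ?_
  rw [hf (B i)]
  simp only [star_sum, Finset.sum_mul, star_mul']
  simp only [Finset.mul_sum]
  refine Finset.sum_congr rfl fun _ _ => Finset.sum_congr rfl fun _ _ =>
    Finset.sum_congr rfl fun _ _ => Finset.sum_congr rfl fun _ _ => by ring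

theorem mem_span_of_convex_comb {m n k r s : ℕ} (A : Fin k → Matrix (Fin n) (Fin m) ℂ)
    (B : Fin r → Matrix (Fin n) (Fin m) ℂ) (C : Fin s → Matrix (Fin n) (Fin m) ℂ)
    (L L₁ L₂ : Matrix (Fin m) (Fin m) ℂ →ₗ[ℂ] Matrix (Fin n) (Fin n) ℂ)
    (hL : ∀ X, L X = ∑ i, A i * X * (A i)ᴴ) (hL₁ : ∀ X, L₁ X = ∑ i, B i * X * (B i)ᴴ)
    (hL₂ : ∀ X, L₂ X = ∑ i, C i * X * (C i)ᴴ) (t : ℝ) (ht0 : 0 < t) (ht1 : t < 1)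
    (h : L = (t : ℂ) • L₁ + ((1 - t : ℝ) : ℂ) • L₂) (l : Fin r) :
    B l ∈ Submodule.span ℂ (Set.range A) := by
  by_contra hB
  obtain ⟨f, hfB, hfA⟩ := Submodule.exists_le_ker_of_notMem hB
  have hA (i) : f (A i) = 0 := hfA (Submodule.subset_span ⟨i, rfl⟩)
  have key : (0 : ℂ) = t * ∑ i, f (B i) * star (f (B i)) +
      ((1 - t : ℝ) : ℂ) * ∑ i, f (C i) * star (f (C i)) := by
    have h0 := sum_functional_mul_star A L hL f
    simp only [hA, zero_mul, Finset.sum_const_zero] at h0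
    rw [h0, sum_functional_mul_star B L₁ hL₁ f, sum_functional_mul_star C L₂ hL₂ f, h]
    simp only [Finset.mul_sum, ← Finset.sum_add_distrib, LinearMap.add_apply,
      LinearMap.smul_apply, Matrix.add_apply, Matrix.smul_apply, smul_eq_mul]
    refine Finset.sum_congr rfl fun _ _ => Finset.sum_congr rfl fun _ _ =>
      Finset.sum_congr rfl fun _ _ => Finset.sum_congr rfl fun _ _ => by ring
  have habs (z : ℂ) : z * star z = ((‖z‖ ^ 2 : ℝ) : ℂ) := by
    simpa using Complex.mul_conj' z
  simp only [habs] at key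
  have keyR : 0 = t * ∑ i, ‖f (B i)‖ ^ 2 + (1 - t) * ∑ i, ‖f (C i)‖ ^ 2 := by
    exact_mod_cast key
  have hpos : 0 < ‖f (B l)‖ ^ 2 := by positivity
  have hle : ‖f (B l)‖ ^ 2 ≤ ∑ i, ‖f (B i)‖ ^ 2 :=
    Finset.single_le_sum (f := fun i => ‖f (B i)‖ ^ 2) (fun _ _ => by positivity)
      (Finset.mem_univ l)
  have h1 : 0 < t * ∑ i, ‖f (B i)‖ ^ 2 := mul_pos ht0 (hpos.trans_le hle)
  have h2 : 0 ≤ (1 - t) * ∑ i, ‖f (C i)‖ ^ 2 :=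
    mul_nonneg (by linarith) (Finset.sum_nonneg fun _ _ => by positivity)
  linarith

theorem eq_of_convex_comb {m n k : ℕ} (A : Fin k → Matrix (Fin n) (Fin m) ℂ)
    (L L₁ L₂ : Matrix (Fin m) (Fin m) ℂ →ₗ[ℂ] Matrix (Fin n) (Fin n) ℂ)
    (hL : ∀ X, L X = ∑ i, A i * X * (A i)ᴴ) (hsum : ∑ i, (A i)ᴴ * A i = 1)
    (hli : LinearIndependent ℂ (fun p : Fin k × Fin k => (A p.1)ᴴ * A p.2))
    (h₁ : IsChannel m n L₁) (h₂ : IsChannel m n L₂) (t : ℝ) (ht0 : 0 < t) (ht1 : t < 1)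
    (h : L = (t : ℂ) • L₁ + ((1 - t : ℝ) : ℂ) • L₂) : L₁ = L := by
  obtain ⟨r, B, hL₁, hB⟩ := h₁
  obtain ⟨s, C, hL₂, -⟩ := h₂
  have hmem (l) := (Submodule.mem_span_range_iff_exists_fun ℂ).1
    (mem_span_of_convex_comb A B C L L₁ L₂ hL hL₁ hL₂ t ht0 ht1 h l)
  choose D hD using hmem
  have hDD : (of D)ᴴ * of D = 1 := by
    have hcomb := sum_conjTranspose_mul_self_comb A (of D)
    simp only [of_apply, hD, hB] at hcomb
    have hzero : ∑ p : Fin k × Fin k,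
        ((of D)ᴴ * of D - 1 : Matrix (Fin k) (Fin k) ℂ) p.1 p.2 • ((A p.1)ᴴ * A p.2) = 0 := by
      rw [Fintype.sum_prod_type]
      simp only [Matrix.sub_apply, sub_smul, Finset.sum_sub_distrib, ← hcomb]
      simp [Matrix.one_apply, hsum]
    ext i j
    exact sub_eq_zero.1 (Fintype.linearIndependent_iff.1 hli _ hzero (i, j))
  refine LinearMap.ext fun X => ?_
  have hcomb := sum_mul_mul_conjTranspose_comb A (of D) X
  simp only [of_apply, hD, hDD] at hcomb
  rw [hL₁, hL, hcomb]
  simp [Matrix.one_apply]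

open scoped Matrix.Norms.L2Operator MatrixOrder in
theorem exists_pos_posSemidef_one_add_sub_smul {k : ℕ} {H : Matrix (Fin k) (Fin k) ℂ}
    (hH : H.IsHermitian) : ∃ ε : ℝ, 0 < ε ∧ (1 + (ε : ℂ) • H).PosSemidef ∧
      (1 - (ε : ℂ) • H).PosSemidef := by
  have hsa : IsSelfAdjoint H := hH
  have hup := hsa.le_algebraMap_norm_self
  have hlow := hsa.neg_algebraMap_norm_le_self
  have hε : (0 : ℝ) < (‖H‖ + 1)⁻¹ := by positivity
  have hscale : (1 : Matrix (Fin k) (Fin k) ℂ) =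
      ((‖H‖ + 1)⁻¹ : ℝ) • (algebraMap ℝ (Matrix (Fin k) (Fin k) ℂ) ‖H‖ + 1) := by
    rw [Algebra.algebraMap_eq_smul_one, smul_add, smul_smul, ← add_smul, ← mul_add_one,
      inv_mul_cancel₀ (by positivity), one_smul]
  refine ⟨(‖H‖ + 1)⁻¹, hε, ?_, ?_⟩ <;> rw [Complex.coe_smul, ← nonneg_iff_posSemidef, hscale]
  · rw [← smul_add]
    refine smul_nonneg hε.le ?_
    rw [add_right_comm]
    exact add_nonneg (neg_le_iff_add_nonneg'.1 hlow) zero_le_one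
  · rw [← smul_sub]
    refine smul_nonneg hε.le ?_
    rw [add_sub_right_comm]
    exact add_nonneg (sub_nonneg.2 hup) zero_le_one

open scoped Matrix.Norms.L2Operator MatrixOrder in
theorem exists_eq_conjTranspose_mul_self {k : ℕ} {P : Matrix (Fin k) (Fin k) ℂ}
    (hP : P.PosSemidef) : ∃ C : Matrix (Fin k) (Fin k) ℂ, P = Cᴴ * C :=
  CStarAlgebra.nonneg_iff_eq_star_mul_self.mp hP.nonneg

theorem isHermitian_eq_zero_of_extreme {m n k : ℕ} (A : Fin k → Matrix (Fin n) (Fin m) ℂ)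
    (L : Matrix (Fin m) (Fin m) ℂ →ₗ[ℂ] Matrix (Fin n) (Fin n) ℂ)
    (hL : ∀ X, L X = ∑ i, A i * X * (A i)ᴴ) (hsum : ∑ i, (A i)ᴴ * A i = 1)
    (hext : IsExtremeChannel m n L) (hli : LinearIndependent ℂ A)
    {H : Matrix (Fin k) (Fin k) ℂ} (hH : H.IsHermitian)
    (hrel : ∑ i, ∑ j, H i j • ((A i)ᴴ * A j) = 0) : H = 0 := by
  obtain ⟨ε, hε, hplus, hminus⟩ := exists_pos_posSemidef_one_add_sub_smul hH
  have hchan (c : ℂ) (hc : (1 + c • H).PosSemidef) :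
      ∃ M : Matrix (Fin m) (Fin m) ℂ →ₗ[ℂ] Matrix (Fin n) (Fin n) ℂ, IsChannel m n M ∧
        ∀ X, M X = L X + c • ∑ i, ∑ j, H j i • (A i * X * (A j)ᴴ) := by
    obtain ⟨C, hC⟩ := exists_eq_conjTranspose_mul_self hc
    refine ⟨krausMap fun l => ∑ i, C l i • A i, ⟨k, _, fun _ => rfl, ?_⟩, fun X => ?_⟩
    · rw [sum_conjTranspose_mul_self_comb, ← hC]
      simp only [Matrix.add_apply, Matrix.smul_apply, add_smul, Finset.sum_add_distrib,
        smul_assoc, ← Finset.smul_sum, hrel]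
      simp [Matrix.one_apply, hsum]
    · refine (sum_mul_mul_conjTranspose_comb A C X).trans ?_
      rw [← hC, hL]
      simp only [Matrix.add_apply, Matrix.smul_apply, add_smul, Finset.sum_add_distrib,
        smul_assoc, ← Finset.smul_sum]
      simp [Matrix.one_apply]
  obtain ⟨L₁, hL₁, hL₁X⟩ := hchan ε hplus
  obtain ⟨L₂, hL₂, hL₂X⟩ := hchan (-ε) (by rwa [neg_smul, ← sub_eq_add_neg])
  have hL₁L := (hext.2 L₁ L₂ hL₁ hL₂ (1 / 2) (by norm_num) (by norm_num) (by
    refine LinearMap.ext fun X => ?_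
    simp only [LinearMap.add_apply, LinearMap.smul_apply, hL₁X, hL₂X]
    push_cast
    module)).1
  have hzero (X : Matrix (Fin m) (Fin m) ℂ) : ∑ i, ∑ j, H j i • (A i * X * (A j)ᴴ) = 0 := by
    have := hL₁X X
    rw [hL₁L, left_eq_add] at this
    exact (smul_eq_zero.1 this).resolve_left (by exact_mod_cast hε.ne')
  have hrow (q b i) : ∑ j, H j i * star (A j q b) = 0 := by
    refine Fintype.linearIndependent_iff.1 hli (fun i => ∑ j, H j i * star (A j q b)) ?_ i
    ext p a
    have hentry := congrFun (congrFun (hzero (single a b 1)) p) q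
    simp only [Matrix.sum_apply, Matrix.smul_apply, Matrix.zero_apply, smul_eq_mul,
      Finset.sum_mul] at hentry ⊢
    rw [← hentry]
    refine Finset.sum_congr rfl fun i _ => Finset.sum_congr rfl fun j _ => ?_
    rw [Matrix.mul_assoc (A i), Matrix.mul_apply]
    simp [Matrix.mul_apply, single_apply, ite_and]
    ring
  ext j i
  have hcol : ∑ j, star (H j i) • A j = 0 := by
    ext q b
    have := congrArg star (hrow q b i)
    simpa [Matrix.sum_apply] using this
  simpa using Fintype.linearIndependent_iff.1 hli _ hcol j

/-- Choi: if the `k²` matrices `Aᵢ* Aⱼ` are linearly independent then `L` is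
extreme; conversely, if `L` is extreme and the `Aᵢ` are linearly independent then the `k²`
matrices `Aᵢ* Aⱼ` are linearly independent. -/
theorem stmt7 (m n k : ℕ) (A : Fin k → Matrix (Fin n) (Fin m) ℂ)
    (L : Matrix (Fin m) (Fin m) ℂ →ₗ[ℂ] Matrix (Fin n) (Fin n) ℂ)
    (hL : ∀ X, L X = ∑ i, A i * X * (A i)ᴴ)
    (hsum : ∑ i, (A i)ᴴ * A i = 1) :
    (LinearIndependent ℂ (fun p : Fin k × Fin k => (A p.1)ᴴ * A p.2) →
      IsExtremeChannel m n L) ∧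
    (IsExtremeChannel m n L → LinearIndependent ℂ A →
      LinearIndependent ℂ (fun p : Fin k × Fin k => (A p.1)ᴴ * A p.2)) := by
  refine ⟨fun hli => ⟨⟨k, A, hL, hsum⟩, fun L₁ L₂ h₁ h₂ t ht0 ht1 h => ⟨?_, ?_⟩⟩,
    fun hext hli => ?_⟩
  · exact eq_of_convex_comb A L L₁ L₂ hL hsum hli h₁ h₂ t ht0 ht1 h
  · refine eq_of_convex_comb A L L₂ L₁ hL hsum hli h₂ h₁ (1 - t) (by linarith) (by linarith) ?_
    rw [h, add_comm, sub_sub_cancel]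
  · rw [Fintype.linearIndependent_iff]
    intro g hg
    set G : Matrix (Fin k) (Fin k) ℂ := of fun i j => g (i, j) with hGdef
    have hG : ∑ i, ∑ j, G i j • ((A i)ᴴ * A j) = 0 := by
      rw [← hg, Fintype.sum_prod_type]
      rfl
    have hG' : ∑ i, ∑ j, Gᴴ i j • ((A i)ᴴ * A j) = 0 := by
      have := congrArg conjTranspose hG
      rw [Finset.sum_comm] at this
      simpa [conjTranspose_sum, conjTranspose_smul, conjTranspose_mul] using this
    have hre : G + Gᴴ = 0 := by
      refine isHermitian_eq_zero_of_extreme A L hL hsum hext hli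
        (isHermitian_add_transpose_self G) ?_
      simp only [Matrix.add_apply, add_smul, Finset.sum_add_distrib, hG, hG', add_zero]
    have him : Complex.I • (G - Gᴴ) = 0 := by
      refine isHermitian_eq_zero_of_extreme A L hL hsum hext hli ?_ ?_
      · simp [IsHermitian, conjTranspose_smul, ← smul_neg]
      · simp only [Matrix.sub_apply, Matrix.smul_apply, smul_assoc, ← Finset.smul_sum, sub_smul,
          Finset.sum_sub_distrib, hG, hG', sub_zero, smul_zero]
    have hdiff : G - Gᴴ = 0 := (smul_eq_zero.1 him).resolve_left Complex.I_ne_zero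
    have hG0 : G = 0 := by
      have : (2 : ℂ) • G = 0 := by
        rw [show (2 : ℂ) • G = (G + Gᴴ) + (G - Gᴴ) by module, hre, hdiff, add_zero]
      exact (smul_eq_zero.1 this).resolve_left two_ne_zero
    exact fun p => congrFun (congrFun hG0 p.1) p.2
end

section
/- Let m,n,k be positive integers. There exist matrices A_1,…,A_k ∈ ℂ^{n×m} with ∑_{i=1}^k A_i^* A_i = I_m if and only if k·min(m,n) ≥ m. Consequently, the set L_{m,n,k} of quantum channels L from m×m to n×n matrices with rank Z(L) ≤ k is nonempty if and only if k·min(m,n) ≥ m. -/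
open Matrix
open scoped ComplexOrder

/-- The matrix whose columns are the vectorizations of the matrices `A i`. -/
def krausMatrix {m n k : ℕ} (A : Fin k → Matrix (Fin n) (Fin m) ℂ) :
    Matrix (Fin m × Fin n) (Fin k) ℂ :=
  Matrix.of fun ip l => A l ip.2 ip.1

lemma choi_eq_krausMatrix_mul_conjTranspose {m n k : ℕ}
    {L : Matrix (Fin m) (Fin m) ℂ →ₗ[ℂ] Matrix (Fin n) (Fin n) ℂ}
    {A : Fin k → Matrix (Fin n) (Fin m) ℂ} (hL : ∀ X, L X = ∑ i, A i * X * (A i)ᴴ) :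
    choi m n L = krausMatrix A * (krausMatrix A)ᴴ := by
  ext ⟨i, p⟩ ⟨j, q⟩
  simp [choi, krausMatrix, hL, Matrix.sum_apply, Matrix.mul_apply, Matrix.single_apply, ite_and]

/-- Multiplication of a vector by the matrix with a given vectorization, as a bilinear map. -/
def vecToMulVecLin (m n : ℕ) :
    (Fin m × Fin n → ℂ) →ₗ[ℂ] (Fin m → ℂ) →ₗ[ℂ] (Fin n → ℂ) :=
  LinearMap.mk₂ ℂ (fun w x p => ∑ i, w (i, p) * x i)
    (fun _ _ _ => by ext; simp [add_mul, Finset.sum_add_distrib])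
    (fun _ _ _ => by ext; simp [Finset.mul_sum, mul_assoc])
    (fun _ _ _ => by ext; simp [mul_add, Finset.sum_add_distrib])
    (fun _ _ _ => by ext; simp [Finset.mul_sum, mul_left_comm])

lemma le_rank_krausMatrix_mul {m n k : ℕ} {A : Fin k → Matrix (Fin n) (Fin m) ℂ}
    (hA : ∑ i, (A i)ᴴ * A i = 1) : m ≤ (krausMatrix A).rank * n := by
  set W := Submodule.span ℂ (Set.range (krausMatrix A).col) with hW
  let f : (Fin m → ℂ) →ₗ[ℂ] W →ₗ[ℂ] (Fin n → ℂ) :=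
    (LinearMap.lcomp ℂ _ W.subtype) ∘ₗ (vecToMulVecLin m n).flip
  have hf : Function.Injective f := by
    rw [injective_iff_map_eq_zero]
    intro x hx
    have hAx (l : Fin k) : A l *ᵥ x = 0 :=
      LinearMap.congr_fun hx ⟨(krausMatrix A).col l, Submodule.subset_span ⟨l, rfl⟩⟩
    rw [← Matrix.one_mulVec x, ← hA, Matrix.sum_mulVec]
    simp [← Matrix.mulVec_mulVec, hAx]
  have h := LinearMap.finrank_le_finrank_of_injective hf
  rw [Module.finrank_linearMap] at h
  simpa [Matrix.rank_eq_finrank_span_cols, ← hW] using h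

lemma exists_sum_conjTranspose_mul_self_eq_one {m n k : ℕ} (h : m ≤ k * n) :
    ∃ A : Fin k → Matrix (Fin n) (Fin m) ℂ, ∑ i, (A i)ᴴ * A i = 1 := by
  obtain ⟨e⟩ : Nonempty (Fin m ↪ Fin k × Fin n) :=
    Function.Embedding.nonempty_of_card_le (by simpa using h)
  refine ⟨fun l => Matrix.of fun p i => if e i = (l, p) then 1 else 0, ?_⟩
  ext i j
  simp only [Matrix.sum_apply, Matrix.mul_apply, Matrix.conjTranspose_apply, Matrix.of_apply]
  rw [← Fintype.sum_prod_type' (f := fun l p =>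
    star (if e i = (l, p) then (1 : ℂ) else 0) * if e j = (l, p) then 1 else 0)]
  simp [Matrix.one_apply, apply_ite, eq_comm]

lemma le_mul_min_iff {m n k : ℕ} (hk : 0 < k) : m ≤ k * min m n ↔ m ≤ k * n := by
  rw [← Nat.mul_min_mul_left, le_min_iff]
  exact and_iff_right (Nat.le_mul_of_pos_left m hk)

/-- there exist `A₁,…,A_k ∈ ℂ^{n×m}` with `∑ Aᵢ* Aᵢ = I_m` iff `k·min(m,n) ≥ m`;
consequently `L_{m,n,k}` is nonempty iff `k·min(m,n) ≥ m`. -/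
theorem stmt8 (m n k : ℕ) (hm : 0 < m) (hn : 0 < n) (hk : 0 < k) :
    ((∃ A : Fin k → Matrix (Fin n) (Fin m) ℂ, ∑ i, (A i)ᴴ * A i = 1) ↔
      m ≤ k * min m n) ∧
    ((∃ L : Matrix (Fin m) (Fin m) ℂ →ₗ[ℂ] Matrix (Fin n) (Fin n) ℂ,
        IsChannel m n L ∧ (choi m n L).rank ≤ k) ↔ m ≤ k * min m n) := by
  rw [le_mul_min_iff hk]
  refine ⟨⟨?_, exists_sum_conjTranspose_mul_self_eq_one⟩, ⟨?_, fun h => ?_⟩⟩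
  · rintro ⟨A, hA⟩
    refine (le_rank_krausMatrix_mul hA).trans (Nat.mul_le_mul_right n ?_)
    simpa using (krausMatrix A).rank_le_card_width
  · rintro ⟨L, ⟨r, A, hL, hA⟩, hr⟩
    rw [choi_eq_krausMatrix_mul_conjTranspose hL, Matrix.rank_self_mul_conjTranspose] at hr
    exact (le_rank_krausMatrix_mul hA).trans (Nat.mul_le_mul_right n hr)
  · obtain ⟨A, hA⟩ := exists_sum_conjTranspose_mul_self_eq_one h
    let L : Matrix (Fin m) (Fin m) ℂ →ₗ[ℂ] Matrix (Fin n) (Fin n) ℂ :=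
      { toFun := fun X => ∑ i, A i * X * (A i)ᴴ
        map_add' := fun X Y => by simp [Matrix.mul_add, Matrix.add_mul, Finset.sum_add_distrib]
        map_smul' := fun c X => by simp [Finset.smul_sum] }
    refine ⟨L, ⟨k, A, fun _ => rfl, hA⟩, ?_⟩
    rw [choi_eq_krausMatrix_mul_conjTranspose (L := L) (A := A) fun _ => rfl,
      Matrix.rank_self_mul_conjTranspose]
    simpa using (krausMatrix A).rank_le_card_width
end

section
/- Let k ≤ m and let A_1,…,A_k ∈ ℂ^{n×m} satisfy ∑_{i=1}^k A_i^* A_i = I_m. Then for every ε > 0 there exist matrices A_1',…,A_k' ∈ ℂ^{n×m} such that ∑_{i=1}^k A_i'^* A_i' = I_m, the k² matrices A_i'^* A_j' (i,j ∈ {1,…,k}) are linearly independent over ℂ, and ‖A_i' − A_i‖ < ε for every i ∈ {1,…,k}. -/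
open Matrix
open scoped ComplexOrder

attribute [local instance] Matrix.frobeniusNormedAddCommGroup

open Filter Topology

/-- A quadratic matrix pencil with constant term `1` is singular at only finitely many scalars. -/
lemma eventually_det_quadratic_pencil_ne_zero {ι : Type*} [Fintype ι] [DecidableEq ι]
    (M N : Matrix ι ι ℂ) :
    ∀ᶠ s : ℂ in cofinite, (s ^ 2 • M + s • N + 1).det ≠ 0 := by
  let P : Polynomial ℂ :=
    ((Polynomial.X : Polynomial ℂ) ^ 2 • M.map Polynomial.C
      + (Polynomial.X : Polynomial ℂ) • N.map Polynomial.C + 1).det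
  have hP : ∀ s, P.eval s = (s ^ 2 • M + s • N + 1).det := by
    intro s
    rw [← Polynomial.coe_evalRingHom, RingHom.map_det]
    congr 1
    ext i j
    simp [Matrix.one_apply, apply_ite (Polynomial.eval s)]
    ring
  have hP0 : P ≠ 0 := by
    intro h
    have := hP 0
    simp [h] at this
  refine (Polynomial.finite_setOfPred_isRoot hP0).subset fun s hs => ?_
  simpa [Polynomial.IsRoot, hP] using hs

/-- Matrix units in a common row perturb any family into one with independent products
`Dᵢ* Dⱼ`, up to finitely many exceptional scalings. -/
lemma eventually_linearIndependent_conjTranspose_mul {m n k : ℕ} (hk : k ≤ m) (r : Fin n)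
    (A : Fin k → Matrix (Fin n) (Fin m) ℂ) :
    ∀ᶠ s : ℂ in cofinite, star s = s → LinearIndependent ℂ (fun p : Fin k × Fin k =>
      (s • A p.1 + Matrix.single r (Fin.castLE hk p.1) 1)ᴴ *
        (s • A p.2 + Matrix.single r (Fin.castLE hk p.2) 1)) := by
  let B : Fin k → Matrix (Fin n) (Fin m) ℂ := fun i => Matrix.single r (Fin.castLE hk i) 1
  let c : Matrix (Fin m) (Fin m) ℂ →ₗ[ℂ] (Fin k × Fin k → ℂ) :=
    { toFun := fun X q => X (Fin.castLE hk q.1) (Fin.castLE hk q.2)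
      map_add' := fun _ _ => rfl
      map_smul' := fun _ _ => rfl }
  let M : Matrix (Fin k × Fin k) (Fin k × Fin k) ℂ :=
    Matrix.of fun p => c ((A p.1)ᴴ * A p.2)
  let N : Matrix (Fin k × Fin k) (Fin k × Fin k) ℂ :=
    Matrix.of fun p => c ((A p.1)ᴴ * B p.2 + (B p.1)ᴴ * A p.2)
  filter_upwards [eventually_det_quadratic_pencil_ne_zero M N] with s hs hreal
  have hrow : ∀ p : Fin k × Fin k, c ((s • A p.1 + B p.1)ᴴ * (s • A p.2 + B p.2)) =
      (s ^ 2 • M + s • N + 1) p := by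
    intro p
    have hB : c ((B p.1)ᴴ * B p.2) = (1 : Matrix (Fin k × Fin k) (Fin k × Fin k) ℂ) p := by
      ext q
      change ((B p.1)ᴴ * B p.2) (Fin.castLE hk q.1) (Fin.castLE hk q.2) = _
      simp [B, Matrix.single_apply, Matrix.one_apply, Prod.ext_iff]
    have hexpand : (s • A p.1 + B p.1)ᴴ * (s • A p.2 + B p.2) =
        s ^ 2 • ((A p.1)ᴴ * A p.2) + s • ((A p.1)ᴴ * B p.2 + (B p.1)ᴴ * A p.2)
          + (B p.1)ᴴ * B p.2 := by
      simp only [Matrix.conjTranspose_add, Matrix.conjTranspose_smul, hreal, Matrix.add_mul,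
        Matrix.mul_add, Matrix.smul_mul, Matrix.mul_smul, smul_add, smul_smul, pow_two]
      abel
    rw [hexpand, map_add, map_add, map_smul, map_smul, hB]
    rfl
  refine LinearIndependent.of_comp c ?_
  change LinearIndependent ℂ fun p : Fin k × Fin k =>
    c ((s • A p.1 + B p.1)ᴴ * (s • A p.2 + B p.2))
  simp only [hrow]
  exact Matrix.linearIndependent_rows_of_det_ne_zero hs

/-- Right multiplication by an invertible matrix preserves independence of the products
`Dᵢ* Dⱼ`. -/
lemma LinearIndependent.conjTranspose_mul_mul_right {m n k : ℕ}
    {D : Fin k → Matrix (Fin n) (Fin m) ℂ} {R : Matrix (Fin m) (Fin m) ℂ} (hR : IsUnit R)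
    (hD : LinearIndependent ℂ (fun p : Fin k × Fin k => (D p.1)ᴴ * D p.2)) :
    LinearIndependent ℂ (fun p : Fin k × Fin k => (D p.1 * R)ᴴ * (D p.2 * R)) := by
  obtain ⟨V, hV⟩ := hR.exists_right_inv
  have hV' : Vᴴ * Rᴴ = 1 := by
    rw [← Matrix.conjTranspose_mul, hV, Matrix.conjTranspose_one]
  have hconj : ∀ p : Fin k × Fin k,
      Vᴴ * (((D p.1 * R)ᴴ * (D p.2 * R)) * V) = (D p.1)ᴴ * D p.2 := fun p =>
    calc Vᴴ * (((D p.1 * R)ᴴ * (D p.2 * R)) * V)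
        = (Vᴴ * Rᴴ) * ((D p.1)ᴴ * D p.2) * (R * V) := by
          simp only [Matrix.conjTranspose_mul, Matrix.mul_assoc]
      _ = (D p.1)ᴴ * D p.2 := by rw [hV, hV', Matrix.one_mul, Matrix.mul_one]
  refine LinearIndependent.of_comp (LinearMap.mulLeft ℂ Vᴴ ∘ₗ LinearMap.mulRight ℂ V) ?_
  change LinearIndependent ℂ fun p : Fin k × Fin k => Vᴴ * (((D p.1 * R)ᴴ * (D p.2 * R)) * V)
  simpa only [hconj] using hD

open scoped Matrix.Norms.L2Operator MatrixOrder in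
/-- Positive semidefinite matrices tending to `1` are normalized to `1` by congruences that
tend to `1`. -/
lemma exists_tendsto_one_conjTranspose_mul_mul_eq_one {ι : Type*} {l : Filter ι} {m : ℕ}
    {S : ι → Matrix (Fin m) (Fin m) ℂ} (hpos : ∀ i, (S i).PosSemidef)
    (hS : Tendsto S l (𝓝 1)) :
    ∃ Q : ι → Matrix (Fin m) (Fin m) ℂ, Tendsto Q l (𝓝 1) ∧
      ∀ᶠ i in l, IsUnit (Q i) ∧ (Q i)ᴴ * S i * Q i = 1 := by
  have hsp : ∀ᶠ i in l, IsStrictlyPositive (S i) := by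
    have hu : ∀ᶠ i in l, IsUnit (S i) := hS.eventually (Units.isOpen.mem_nhds isUnit_one)
    filter_upwards [hu] with i hi
    exact hi.isStrictlyPositive (Matrix.nonneg_iff_posSemidef.mpr (hpos i))
  refine ⟨fun i => S i ^ (-(1 / 2) : ℝ), ?_, ?_⟩
  · have hc := CFC.continuousOn_rpow (A := Matrix (Fin m) (Fin m) ℂ) (-(1 / 2))
      1 (by simp)
    have := hc.tendsto.comp (tendsto_nhdsWithin_iff.mpr ⟨hS, hsp⟩)
    simpa [Function.comp_def] using this
  · filter_upwards [hsp] with i hi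
    refine ⟨hi.isUnit.cfcRpow _ hi.nonneg, ?_⟩
    have hQ : (S i ^ (-(1 / 2) : ℝ))ᴴ = S i ^ (-(1 / 2) : ℝ) :=
      (IsSelfAdjoint.of_nonneg CFC.rpow_nonneg).star_eq
    have h1 : S i ^ (-(1 / 2) : ℝ) * S i = S i ^ (1 / 2 : ℝ) := by
      nth_rw 2 [← CFC.rpow_one (S i) hi.nonneg]
      rw [← CFC.rpow_add hi.isUnit]
      norm_num
    rw [hQ, h1, CFC.rpow_mul_rpow_neg _ hi]

/-- Kraus families with `∑ Aᵢ* Aᵢ = I` and `k ≤ m` can be approximated arbitrarily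
well by ones for which the `k²` products `Aᵢ'* Aⱼ'` are linearly independent. -/
theorem stmt9 (m n k : ℕ) (hk : k ≤ m) (A : Fin k → Matrix (Fin n) (Fin m) ℂ)
    (hsum : ∑ i, (A i)ᴴ * A i = 1) :
    ∀ ε : ℝ, 0 < ε → ∃ A' : Fin k → Matrix (Fin n) (Fin m) ℂ,
      (∑ i, (A' i)ᴴ * A' i = 1) ∧
      LinearIndependent ℂ (fun p : Fin k × Fin k => (A' p.1)ᴴ * A' p.2) ∧
      ∀ i, ‖A' i - A i‖ < ε := by
  intro ε hε
  rcases isEmpty_or_nonempty (Fin k) with hempty | ⟨⟨i₀⟩⟩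
  · exact ⟨A, hsum, linearIndependent_empty_type, fun i => hempty.elim i⟩
  rcases isEmpty_or_nonempty (Fin n) with hempty | ⟨⟨r⟩⟩
  · have h := congrFun (congrFun hsum (Fin.castLE hk i₀)) (Fin.castLE hk i₀)
    simp [Matrix.sum_apply, Matrix.mul_apply] at h
  let B : Fin k → Matrix (Fin n) (Fin m) ℂ := fun i => Matrix.single r (Fin.castLE hk i) 1
  let F : ℝ → Fin k → Matrix (Fin n) (Fin m) ℂ := fun t i => A i + (t : ℂ) • B i
  have hF : ∀ i, Tendsto (fun t => F t i) (𝓝[≠] 0) (𝓝 (A i)) := fun i => by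
    have hcont : Continuous fun t => F t i := by fun_prop
    simpa [F] using (hcont.tendsto 0).mono_left nhdsWithin_le_nhds
  have hFsum : Tendsto (fun t => ∑ i, (F t i)ᴴ * F t i) (𝓝[≠] 0) (𝓝 1) := by
    rw [← hsum]
    have hcont : Continuous fun t => ∑ i, (F t i)ᴴ * F t i := by fun_prop
    simpa [F] using (hcont.tendsto 0).mono_left nhdsWithin_le_nhds
  obtain ⟨Q, hQ, hQS⟩ := exists_tendsto_one_conjTranspose_mul_mul_eq_one
    (fun t => Matrix.posSemidef_sum _ fun i _ => Matrix.posSemidef_conjTranspose_mul_self (F t i))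
    hFsum
  have hclose : ∀ᶠ t in 𝓝[≠] (0 : ℝ), ∀ i, ‖F t i * Q t - A i‖ < ε := by
    refine eventually_all.mpr fun i => ?_
    have hmul : Tendsto (fun t => F t i * Q t) (𝓝[≠] 0) (𝓝 (A i)) := by
      have hcont : Continuous fun x : Matrix (Fin n) (Fin m) ℂ × Matrix (Fin m) (Fin m) ℂ =>
        x.1 * x.2 := by fun_prop
      simpa [Function.comp_def] using (hcont.tendsto (A i, 1)).comp ((hF i).prodMk_nhds hQ)
    simpa [dist_eq_norm] using hmul.eventually (Metric.ball_mem_nhds (A i) hε)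
  have hinv : Tendsto (fun t : ℝ => (t : ℂ)⁻¹) (𝓝[≠] 0) cofinite := by
    have h1 : Tendsto (fun t : ℝ => t⁻¹) (𝓝[≠] 0) cofinite :=
      tendsto_inv₀_nhdsNE_zero.mono_right (Bornology.le_cofinite ℝ)
    simpa [Function.comp_def] using Complex.ofReal_injective.tendsto_cofinite.comp h1
  obtain ⟨t, ⟨hunit, hnormalized⟩, hnear, hindep, ht⟩ :=
    (hQS.and (hclose.and ((hinv.eventually
      (eventually_linearIndependent_conjTranspose_mul hk r A)).and
        eventually_mem_nhdsWithin))).exists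
  have ht' : (t : ℂ) ≠ 0 := Complex.ofReal_ne_zero.mpr ht
  have hscale : ∀ i, ((t : ℂ)⁻¹ • A i + B i) * ((t : ℂ) • Q t) = F t i * Q t := fun i => by
    rw [Matrix.mul_smul, ← Matrix.smul_mul, smul_add, smul_smul, mul_inv_cancel₀ ht', one_smul]
  refine ⟨fun i => F t i * Q t, ?_, ?_, hnear⟩
  · rw [← hnormalized, Finset.mul_sum, Finset.sum_mul]
    simp only [Matrix.conjTranspose_mul, Matrix.mul_assoc]
  · have h := (hindep (by simp)).conjTranspose_mul_mul_right
      (D := fun i => (t : ℂ)⁻¹ • A i + B i) (hunit.smul (Units.mk0 _ ht'))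
    simpa only [Units.smul_mk0, hscale] using h
end
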